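/- Comparison property of the Skorokhod reflection map: let x, y : [0,∞) → ℝ be functions bounded on compact intervals, with y nonnegative and nondecreasing. Define the Skorokhod reflection R(f)(t) := f(t) + sup_{0 ≤ s ≤ t} max(−f(s), 0). Then for all t ≥ 0, R(x + y)(t) ≥ R(x)(t). -/

import Mathlib

open MeasureTheory ProbabilityTheory Filter Set
open scoped ENNReal NNReal

/-!
The regulator of a path `f` at time `t` is the smallest constant `c ≥ 0` with `f + c ≥ 0` on
`[a, t]`. If `l` is the regulator of `x + y`, then `y t + l t` is such a constant for `x`, because
`y ≤ y t` on `[a, t]`. Hence the regulator of `x` at `t` is at most `y t + l t`.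
-/

section Skorokhod

variable {T E : Type*} [Preorder T] [ConditionallyCompleteLattice E] [AddCommGroup E]

/-- The regulator `l` of the one-dimensional Skorokhod map of a path `f` started at time `a`: the
cumulative push that keeps `f + l` nonnegative. As a conditional supremum it is meaningful only
when `a ≤ t` and `f` is bounded below on `[a, t]`. -/
noncomputable def skorokhodRegulator (a : T) (f : T → E) (t : T) : E :=
  sSup ((fun s => (f s)⁻) '' Icc a t)

/-- The reflected path `z = f + l` of the one-dimensional Skorokhod map, where `l` is the regulator
of `f`. -/
noncomputable def skorokhodReflection (a : T) (f : T → E) (t : T) : E :=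
  f t + skorokhodRegulator a f t

variable [IsOrderedAddMonoid E] {a s t : T} {f x y : T → E} {c : E}

lemma negPart_le_skorokhodRegulator (hf : BddBelow (f '' Icc a t)) (hs : s ∈ Icc a t) :
    (f s)⁻ ≤ skorokhodRegulator a f t := by
  have hbdd : BddAbove ((fun r => (f r)⁻) '' Icc a t) := by
    simpa only [image_image] using negPart_anti.map_bddBelow hf
  exact le_csSup hbdd (mem_image_of_mem _ hs)

lemma skorokhodRegulator_nonneg (hat : a ≤ t) (hf : BddBelow (f '' Icc a t)) :
    0 ≤ skorokhodRegulator a f t :=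
  (negPart_nonneg _).trans (negPart_le_skorokhodRegulator hf (right_mem_Icc.2 hat))

lemma skorokhodRegulator_le (hat : a ≤ t) (hc : 0 ≤ c) (hfc : ∀ s ∈ Icc a t, 0 ≤ f s + c) :
    skorokhodRegulator a f t ≤ c :=
  csSup_le ((nonempty_Icc.2 hat).image _) <| forall_mem_image.2 fun s hs =>
    sup_le (neg_le_iff_add_nonneg'.2 (hfc s hs)) hc

lemma bddBelow_image_add_of_monotoneOn (hx : BddBelow (x '' Icc a t))
    (hy : MonotoneOn y (Icc a t)) : BddBelow ((x + y) '' Icc a t) := by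
  obtain ⟨m, hm⟩ := hx
  refine ⟨m + y a, forall_mem_image.2 fun s hs => ?_⟩
  exact add_le_add (hm (mem_image_of_mem x hs))
    (hy (left_mem_Icc.2 (hs.1.trans hs.2)) hs hs.1)

lemma skorokhodRegulator_le_add_skorokhodRegulator (hat : a ≤ t) (hx : BddBelow (x '' Icc a t))
    (hy : MonotoneOn y (Icc a t)) (hyt : 0 ≤ y t) :
    skorokhodRegulator a x t ≤ y t + skorokhodRegulator a (x + y) t := by
  have hxy : BddBelow ((x + y) '' Icc a t) := bddBelow_image_add_of_monotoneOn hx hy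
  refine skorokhodRegulator_le hat (add_nonneg hyt (skorokhodRegulator_nonneg hat hxy))
    fun s hs => ?_
  have hpush : -(x + y) s ≤ skorokhodRegulator a (x + y) t :=
    (neg_le_negPart _).trans (negPart_le_skorokhodRegulator hxy hs)
  calc
    0 ≤ (x + y) s + skorokhodRegulator a (x + y) t := neg_le_iff_add_nonneg'.1 hpush
    _ = x s + (y s + skorokhodRegulator a (x + y) t) := add_assoc _ _ _
    _ ≤ x s + (y t + skorokhodRegulator a (x + y) t) := by
      gcongr
      exact hy hs (right_mem_Icc.2 hat) hs.2

theorem stmt18_general (hat : a ≤ t) (hx : BddBelow (x '' Icc a t))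
    (hy : MonotoneOn y (Icc a t)) (hyt : 0 ≤ y t) :
    skorokhodReflection a x t ≤ skorokhodReflection a (x + y) t :=
  calc
    x t + skorokhodRegulator a x t ≤ x t + (y t + skorokhodRegulator a (x + y) t) := by
      gcongr
      exact skorokhodRegulator_le_add_skorokhodRegulator hat hx hy hyt
    _ = (x + y) t + skorokhodRegulator a (x + y) t := (add_assoc _ _ _).symm

end Skorokhod

theorem stmt18
    (x y : ℝ → ℝ)
    (hx : ∀ t : ℝ, BddAbove (x '' Icc 0 t) ∧ BddBelow (x '' Icc 0 t))
    (hy : ∀ t : ℝ, BddAbove (y '' Icc 0 t) ∧ BddBelow (y '' Icc 0 t))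
    (hynn : ∀ t, 0 ≤ t → 0 ≤ y t)
    (hymono : MonotoneOn y (Ici (0:ℝ))) :
    ∀ t, 0 ≤ t →
      x t + sSup ((fun s => max (-(x s)) 0) '' Icc 0 t) ≤
        (x t + y t) + sSup ((fun s => max (-(x s + y s)) 0) '' Icc 0 t) :=
  fun t ht => stmt18_general ht (hx t).2 (hymono.mono Icc_subset_Ici_self) (hynn t ht)
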